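/- Define the functional f : X → ℂ by f(a) = exp(iπ·ε·Σ_{k∈L} a(k)²). Then Σ_{a∈X} ε₀·exp(iπ·ε·Σ_{k∈L} a(k)²) = (−1)^(H/2), and for every b ∈ X: (Ff)(b) = (−1)^(H/2)·conj(f(b)) = (−1)^(H/2)·exp(−iπ·ε·Σ_{k∈L} b(k)²). -/

import Mathlib

open Complex Finset

noncomputable section

/-- Balanced representative of `z : ZMod n` in `[-n/2, n/2)`. -/
def bval (n : ℕ) (z : ZMod n) : ℤ :=
  if 2 * (z.val : ℤ) < (n : ℤ) then (z.val : ℤ) else (z.val : ℤ) - (n : ℤ)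

/-- The real point `ε′·z′ ∈ [-H·H'/2, H·H'/2)` of `L′` corresponding to
`v : ZMod (H·H'^2)`; the group structure of `ZMod (H·H'^2)` realizes pointwise
addition followed by reduction modulo `H·H'` back into `L′`. -/
def Lp2 (H H' : ℕ) (v : ZMod (H * H' ^ 2)) : ℝ := (bval (H * H' ^ 2) v : ℝ) / H'

/-- `X` is the finite abelian group of all functions from `L` (`H²` points) to `L′`. -/
abbrev X2 (H H' : ℕ) := ZMod (H ^ 2) → ZMod (H * H' ^ 2)

/-- `⟨a,b⟩ = ε·Σ_{k∈L} a(k)·b(k)` with `ε = 1/H`. -/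
def ip2 (H H' : ℕ) [NeZero H] (a b : X2 H H') : ℝ :=
  (1 / H) * ∑ k : ZMod (H ^ 2), Lp2 H H' (a k) * Lp2 H H' (b k)

/-- `ε₀ = H^(−H²/2)·H′^(−H²)` (`H` is even, so `H²/2` is exact). -/
def eps02 (H H' : ℕ) : ℝ := ((H : ℝ) ^ (H ^ 2 / 2))⁻¹ * ((H' : ℝ) ^ (H ^ 2))⁻¹

/-- `(Ff)(b) = Σ_{a∈X} ε₀·exp(−2πi⟨a,b⟩)·f(a)`. -/
def Ftr2 (H H' : ℕ) [NeZero H] [NeZero H'] (f : X2 H H' → ℂ) (b : X2 H H') : ℂ :=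
  ∑ a : X2 H H',
    (eps02 H H' : ℂ) * Complex.exp (-2 * (Real.pi : ℂ) * I * (ip2 H H' a b : ℂ)) * f a

/-- `(f∗g)(a) = Σ_{a′∈X} ε₀·f(a−a′)·g(a′)`. -/
def conv2 (H H' : ℕ) [NeZero H] [NeZero H'] (f g : X2 H H' → ℂ) (a : X2 H H') : ℂ :=
  ∑ a' : X2 H H', (eps02 H H' : ℂ) * f (a - a') * g a'

/-!
The function `v ↦ exp(πi v²/N)` on `ℤ/N`, with `N` even, is mapped by the discrete Fourier transform
to `G` times its complex conjugate, where `G` is the sum of its values: complete the square. With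
`N = H·H′²`, the functional `f` is the product of `H²` copies of this function, so `Ff` is
`ε₀ G^(H²)` times the conjugate of `f`. As `H²` is even, only `G² = iN` is needed, not the
sign of `G`.

This value comes from modularity. Poisson summation for the theta series whose coefficients are
`exp(πi n²/N)` expresses `θ(τ + 1/N)` through `G θ(-1/(N²τ) - 1/N)`. The two arguments are also
related by `τ ↦ -1/τ` and `τ ↦ τ + N`, under which `θ²` has a known behaviour, and comparing the two
relations at a point where `θ` does not vanish yields `G²`.
-/

section JacobiTheta

lemma cpow_one_half_sq (w : ℂ) : (w ^ (1 / 2 : ℂ)) ^ 2 = w := by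
  rw [one_div, cpow_ofNat_inv_pow]

lemma jacobiTheta_neg_one_div_sq (τ : ℂ) :
    jacobiTheta (-1 / τ) ^ 2 = -I * τ * jacobiTheta τ ^ 2 := by
  rcases eq_or_ne τ 0 with rfl | hτ
  · simp [jacobiTheta_eq_jacobiTheta₂, jacobiTheta₂_undef]
  have hS := jacobiTheta₂_functional_equation 0 τ
  simp only [zero_div, ← jacobiTheta_eq_jacobiTheta₂] at hS
  rw [hS, mul_pow, mul_pow, div_pow, cpow_one_half_sq]
  simp [field]

lemma jacobiTheta_add_natCast_of_even {N : ℕ} (hN : Even N) (τ : ℂ) :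
    jacobiTheta (τ + N) = jacobiTheta τ := by
  obtain ⟨k, rfl⟩ := hN
  have hper : Function.Periodic jacobiTheta 2 := fun τ ↦ by rw [add_comm, jacobiTheta_two_add]
  simpa [← mul_two] using hper.nat_mul k τ

-- The inversion `-1 / ·` takes the two arguments of `jacobiTheta` to points that differ by the even
-- integer `N`.
lemma jacobiTheta_neg_one_div_sub_sq {N : ℕ} [NeZero N] (hN : Even N) {τ : ℂ} (hτ : 0 < im τ) :
    jacobiTheta (-1 / (N ^ 2 * τ) - 1 / N) ^ 2 = -N * τ * jacobiTheta (τ + 1 / N) ^ 2 := by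
  have hN₀ : (N : ℂ) ≠ 0 := NeZero.ne _
  have hτ₀ : τ ≠ 0 := by rintro rfl; simp at hτ
  have hα₀ : τ + 1 / N ≠ 0 := by
    intro h
    have him : im (τ + 1 / N) = im τ := by simp
    rw [h, zero_im] at him
    exact hτ.ne him
  set α : ℂ := τ + 1 / N with hα
  set σ : ℂ := -1 / (N ^ 2 * τ) - 1 / N with hσ
  have hNα : N * α = N * τ + 1 := by
    rw [hα]
    field_simp
  have hσα : N * τ * σ = -α := by
    rw [hσ, hα]
    field_simp
    ring
  have hσ₀ : σ ≠ 0 := by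
    intro h
    rw [h, mul_zero, zero_eq_neg] at hσα
    exact hα₀ hσα
  have hinv : -1 / σ = -1 / α + N := by
    field_simp
    linear_combination -hσα - σ * hNα
  have hS : -I * σ * jacobiTheta σ ^ 2 = -I * α * jacobiTheta α ^ 2 := by
    rw [← jacobiTheta_neg_one_div_sq, ← jacobiTheta_neg_one_div_sq, hinv,
      jacobiTheta_add_natCast_of_even hN]
  refine mul_left_cancel₀ (mul_ne_zero (neg_ne_zero.mpr I_ne_zero) hσ₀) ?_
  linear_combination hS - I * jacobiTheta α ^ 2 * hσα

lemma jacobiTheta_ne_zero_of_one_le_im {τ : ℂ} (hτ : 1 ≤ im τ) : jacobiTheta τ ≠ 0 := by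
  intro hzero
  have hle := norm_jacobiTheta_sub_one_le (zero_lt_one.trans_le hτ)
  have hexp : Real.exp (-Real.pi * im τ) < 1 / 3 := by
    have hpi : 3 < Real.pi * im τ := by nlinarith [Real.pi_gt_three]
    rw [neg_mul, Real.exp_neg, one_div]
    gcongr
    linarith [Real.add_one_le_exp (Real.pi * im τ)]
  rw [hzero, zero_sub, norm_neg, norm_one, div_mul_eq_mul_div, le_div_iff₀ (by linarith)] at hle
  linarith

end JacobiTheta

section TwistedTheta

open ZMod

variable {N : ℕ} [NeZero N]

/-- The decomposition of an integer into its residue class modulo `N` and its quotient by `N`,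
the analogue for `ℤ` of `Nat.residueClassesEquiv`. -/
def intResidueClassesEquiv (N : ℕ) [NeZero N] : ℤ ≃ ZMod N × ℤ where
  toFun n := (n, n / N)
  invFun p := p.1.val + N * p.2
  left_inv n := by simp only [val_intCast, Int.emod_add_mul_ediv]
  right_inv p := by
    have hlt : (p.1.val : ℤ) < N := mod_cast p.1.val_lt
    have hN : (N : ℤ) ≠ 0 := mod_cast NeZero.ne N
    ext1
    · simp
    · simp only [Int.add_mul_ediv_left _ _ hN, Int.ediv_eq_zero_of_lt (Int.natCast_nonneg _) hlt,
        zero_add]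

lemma tsum_int_eq_sum_residueClasses {E : Type*} [NormedAddCommGroup E] [CompleteSpace E]
    {f : ℤ → E} (hf : Summable f) :
    ∑' n, f n = ∑ r : ZMod N, ∑' m : ℤ, f (r.val + N * m) := by
  have hf' := (intResidueClassesEquiv N).symm.summable_iff.mpr hf
  calc ∑' n, f n
    _ = ∑' p, (f ∘ (intResidueClassesEquiv N).symm) p :=
      ((intResidueClassesEquiv N).symm.tsum_eq f).symm
    _ = ∑' r, ∑' m, (f ∘ (intResidueClassesEquiv N).symm) (r, m) := hf'.tsum_prod
    _ = ∑ r : ZMod N, ∑' m : ℤ, f (r.val + N * m) := tsum_fintype _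

/-- The Jacobi theta series `∑ c(n) exp(2πinz + πin²τ)` with coefficients `c` periodic
modulo `N`; it is used to compute Gauss sums from the modularity of the theta function. -/
def twistedTheta (c : ZMod N → ℂ) (z τ : ℂ) : ℂ := ∑' n : ℤ, c n * jacobiTheta₂_term n z τ

lemma summable_twistedTheta_term (c : ZMod N → ℂ) (z : ℂ) {τ : ℂ} (hτ : 0 < im τ) :
    Summable fun n : ℤ ↦ c n * jacobiTheta₂_term n z τ := by
  have hterm := ((summable_jacobiTheta₂_term_iff z τ).mpr hτ).norm
  refine (hterm.mul_left ‖c‖).of_norm_bounded fun n ↦ ?_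
  rw [norm_mul]
  gcongr
  exact norm_le_pi_norm c n

lemma jacobiTheta₂_term_add_mul (r m k : ℤ) (z τ : ℂ) :
    jacobiTheta₂_term (r + k * m) z τ =
      jacobiTheta₂_term r z τ * jacobiTheta₂_term m (k * (z + r * τ)) (k ^ 2 * τ) := by
  simp only [jacobiTheta₂_term, ← Complex.exp_add]
  push_cast
  ring_nf

lemma twistedTheta_eq_sum_jacobiTheta₂ (c : ZMod N → ℂ) (z : ℂ) {τ : ℂ} (hτ : 0 < im τ) :
    twistedTheta c z τ = ∑ r : ZMod N, c r * (jacobiTheta₂_term r.val z τ *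
      jacobiTheta₂ (N * (z + r.val * τ)) (N ^ 2 * τ)) := by
  rw [twistedTheta, tsum_int_eq_sum_residueClasses (N := N) (summable_twistedTheta_term c z hτ)]
  refine sum_congr rfl fun r _ ↦ ?_
  rw [jacobiTheta₂, ← tsum_mul_left, ← tsum_mul_left]
  refine tsum_congr fun m ↦ ?_
  have hr : (((r.val + N * m : ℤ)) : ZMod N) = r := by simp
  rw [hr, jacobiTheta₂_term_add_mul]
  push_cast
  rfl

lemma stdAddChar_mul_jacobiTheta₂_term (r : ZMod N) (n : ℤ) (z τ : ℂ) :
    stdAddChar (r * (n : ZMod N)) * jacobiTheta₂_term n z τ =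
      jacobiTheta₂_term n (z + r.val / N) τ := by
  have hr : r * (n : ZMod N) = ((r.val * n : ℤ) : ZMod N) := by simp
  rw [hr, stdAddChar_coe, jacobiTheta₂_term, jacobiTheta₂_term, ← Complex.exp_add]
  push_cast
  ring_nf

lemma twistedTheta_invDFT (c : ZMod N → ℂ) (z : ℂ) {τ : ℂ} (hτ : 0 < im τ) :
    twistedTheta (𝓕⁻ c) z τ = (N : ℂ)⁻¹ * ∑ r : ZMod N, c r * jacobiTheta₂ (z + r.val / N) τ := by
  have hsum (r : ZMod N) :
      Summable fun n : ℤ ↦ c r * jacobiTheta₂_term n (z + r.val / N) τ :=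
    ((summable_jacobiTheta₂_term_iff _ _).mpr hτ).mul_left _
  simp only [jacobiTheta₂, ← tsum_mul_left]
  rw [← Summable.tsum_finsetSum fun r _ ↦ hsum r, ← tsum_mul_left, twistedTheta]
  refine tsum_congr fun n ↦ ?_
  simp only [invDFT_apply, smul_eq_mul, mul_assoc, sum_mul, ← stdAddChar_mul_jacobiTheta₂_term,
    mul_left_comm]

lemma ofReal_mul_cpow {r : ℝ} (hr : 0 ≤ r) (w s : ℂ) : (r * w) ^ s = r ^ s * w ^ s := by
  rcases hr.eq_or_lt with rfl | hr
  · rcases eq_or_ne s 0 with rfl | hs <;> simp [*]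
  rcases eq_or_ne w 0 with rfl | hw
  · rcases eq_or_ne s 0 with rfl | hs <;> simp [*]
  have hr₀ : (r : ℂ) ≠ 0 := ofReal_ne_zero.mpr hr.ne'
  rw [cpow_def_of_ne_zero (mul_ne_zero hr₀ hw), cpow_def_of_ne_zero hr₀, cpow_def_of_ne_zero hw,
    ← Complex.exp_add, log_ofReal_mul hr hw, ofReal_log hr.le, add_mul]

lemma jacobiTheta₂_term_mul_jacobiTheta₂ (r : ℤ) (z : ℂ) {τ : ℂ} (hτ : τ ≠ 0) :
    jacobiTheta₂_term r z τ * jacobiTheta₂ (N * (z + r * τ)) (N ^ 2 * τ) =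
      (N : ℂ)⁻¹ * (1 / (-I * τ) ^ (1 / 2 : ℂ) * cexp (-Real.pi * I * z ^ 2 / τ)) *
        jacobiTheta₂ (z / (N * τ) + r / N) (-1 / (N ^ 2 * τ)) := by
  have hN : (N : ℂ) ≠ 0 := NeZero.ne _
  have hroot : (-I * (N ^ 2 * τ)) ^ (1 / 2 : ℂ) = N * (-I * τ) ^ (1 / 2 : ℂ) := by
    have hsqrt : ((N ^ 2 : ℝ) : ℂ) ^ (1 / 2 : ℂ) = N := by
      rw [show (1 / 2 : ℂ) = ((1 / 2 : ℝ) : ℂ) by push_cast; rfl, ← ofReal_cpow (sq_nonneg _),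
        ← Real.sqrt_eq_rpow, Real.sqrt_sq N.cast_nonneg, ofReal_natCast]
    calc (-I * (N ^ 2 * τ)) ^ (1 / 2 : ℂ)
      _ = (((N ^ 2 : ℝ) : ℂ) * (-I * τ)) ^ (1 / 2 : ℂ) := by push_cast; ring_nf
      _ = N * (-I * τ) ^ (1 / 2 : ℂ) := by rw [ofReal_mul_cpow (sq_nonneg _), hsqrt]
  have hexp : jacobiTheta₂_term r z τ * cexp (-Real.pi * I * (N * (z + r * τ)) ^ 2 / (N ^ 2 * τ)) =
      cexp (-Real.pi * I * z ^ 2 / τ) := by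
    rw [jacobiTheta₂_term, ← Complex.exp_add]
    congr 1
    field_simp
    ring
  have harg : N * (z + r * τ) / (N ^ 2 * τ) = z / (N * τ) + r / N := by
    field_simp
  rw [jacobiTheta₂_functional_equation, hroot, harg, ← hexp]
  ring

theorem twistedTheta_functional_equation (c : ZMod N → ℂ) (z : ℂ) {τ : ℂ} (hτ : 0 < im τ) :
    twistedTheta c z τ = 1 / (-I * τ) ^ (1 / 2 : ℂ) * cexp (-Real.pi * I * z ^ 2 / τ) *
      twistedTheta (𝓕⁻ c) (z / (N * τ)) (-1 / (N ^ 2 * τ)) := by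
  have hτ₀ : τ ≠ 0 := by rintro rfl; simp at hτ
  have him : 0 < im (-1 / (N ^ 2 * τ)) := by
    have hN : 0 < (N : ℝ) ^ 2 := by have := NeZero.pos N; positivity
    have hNτ : 0 < im (N ^ 2 * τ) := by
      rw [← ofReal_natCast, ← ofReal_pow, im_ofReal_mul]
      positivity
    rw [neg_div, one_div, ← inv_neg]
    exact UpperHalfPlane.im_inv_neg_coe_pos ⟨_, hNτ⟩
  rw [twistedTheta_eq_sum_jacobiTheta₂ c z hτ, twistedTheta_invDFT c _ him, mul_left_comm,
    ← mul_assoc, mul_sum]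
  refine sum_congr rfl fun r _ ↦ ?_
  have := jacobiTheta₂_term_mul_jacobiTheta₂ (N := N) r.val z hτ₀
  push_cast at this
  rw [this]
  ring

end TwistedTheta

section Chirp

open ZMod

variable {N : ℕ} [NeZero N]

/-- The quadratic phase `exp(πi v²/N)` on `ℤ/N`. It is computed on the representative of `v` in
`[0, N)`; for even `N` every representative gives the same value. -/
def chirp (N : ℕ) (v : ZMod N) : ℂ := cexp (Real.pi * I * v.val ^ 2 / N)

lemma chirp_intCast (hN : Even N) (n : ℤ) : chirp N n = cexp (Real.pi * I * n ^ 2 / N) := by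
  obtain ⟨k, hk⟩ := hN
  have hN₀ : (N : ℂ) ≠ 0 := NeZero.ne _
  have hk' : (N : ℂ) = 2 * k := by rw [hk]; push_cast; ring
  have hn : (n : ℂ) = (n : ZMod N).val + N * (n / N : ℤ) := by
    exact_mod_cast ((intResidueClassesEquiv N).symm_apply_apply n).symm
  rw [chirp, hn, Complex.exp_eq_exp_iff_exists_int]
  refine ⟨-((n : ZMod N).val * (n / N) + k * (n / N) ^ 2), ?_⟩
  push_cast
  field_simp
  rw [hk']
  ring

lemma conj_chirp_intCast (hN : Even N) (n : ℤ) :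
    starRingEnd ℂ (chirp N n) = cexp (-(Real.pi * I * n ^ 2 / N)) := by
  rw [chirp_intCast hN, ← Complex.exp_conj]
  simp [neg_div]

lemma stdAddChar_neg_mul_mul_chirp (hN : Even N) (j k : ZMod N) :
    stdAddChar (-(j * k)) * chirp N j = chirp N (j - k) * starRingEnd ℂ (chirp N k) := by
  obtain ⟨j, rfl⟩ := ZMod.intCast_surjective j
  obtain ⟨k, rfl⟩ := ZMod.intCast_surjective k
  have hneg : -((j : ZMod N) * k) = ((-(j * k) : ℤ) : ZMod N) := by push_cast; rfl
  rw [conj_chirp_intCast hN, hneg, ← Int.cast_sub, chirp_intCast hN, chirp_intCast hN,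
    stdAddChar_coe, ← Complex.exp_add, ← Complex.exp_add]
  push_cast
  ring_nf

lemma dft_chirp (hN : Even N) (k : ZMod N) :
    𝓕 (chirp N) k = (∑ v, chirp N v) * starRingEnd ℂ (chirp N k) := by
  simp only [dft_apply, smul_eq_mul, stdAddChar_neg_mul_mul_chirp hN, ← sum_mul]
  rw [← Equiv.sum_comp (Equiv.subRight k) (chirp N)]
  rfl

lemma chirp_neg (hN : Even N) (v : ZMod N) : chirp N (-v) = chirp N v := by
  obtain ⟨n, rfl⟩ := ZMod.intCast_surjective v
  rw [← Int.cast_neg, chirp_intCast hN, chirp_intCast hN, Int.cast_neg, neg_sq]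

lemma twistedTheta_chirp (hN : Even N) (z τ : ℂ) :
    twistedTheta (chirp N) z τ = jacobiTheta₂ z (τ + 1 / N) := by
  refine tsum_congr fun n ↦ ?_
  rw [chirp_intCast hN, jacobiTheta₂_term, jacobiTheta₂_term, ← Complex.exp_add]
  ring_nf

lemma twistedTheta_invDFT_chirp (hN : Even N) (z τ : ℂ) :
    twistedTheta (𝓕⁻ (chirp N)) z τ =
      (N : ℂ)⁻¹ * (∑ v, chirp N v) * jacobiTheta₂ z (τ - 1 / N) := by
  rw [jacobiTheta₂, ← tsum_mul_left]
  refine tsum_congr fun n ↦ ?_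
  rw [invDFT_apply', dft_chirp hN, chirp_neg hN, conj_chirp_intCast hN, smul_eq_mul,
    ← mul_assoc, mul_assoc, jacobiTheta₂_term, jacobiTheta₂_term, ← Complex.exp_add]
  ring_nf

lemma jacobiTheta_add_one_div_sq (hN : Even N) {τ : ℂ} (hτ : 0 < im τ) :
    -I * τ * N ^ 2 * jacobiTheta (τ + 1 / N) ^ 2 =
      (∑ v, chirp N v) ^ 2 * jacobiTheta (-1 / (N ^ 2 * τ) - 1 / N) ^ 2 := by
  have hτ₀ : τ ≠ 0 := by rintro rfl; simp at hτ
  have hN₀ : (N : ℂ) ≠ 0 := NeZero.ne _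
  have hfe := twistedTheta_functional_equation (chirp N) 0 hτ
  rw [twistedTheta_chirp hN, twistedTheta_invDFT_chirp hN, zero_div,
    ← jacobiTheta_eq_jacobiTheta₂, ← jacobiTheta_eq_jacobiTheta₂] at hfe
  rw [hfe]
  simp only [mul_pow, div_pow, cpow_one_half_sq]
  simp [field]

theorem sum_chirp_sq (hN : Even N) : (∑ v, chirp N v) ^ 2 = I * N := by
  have hN₀ : (N : ℂ) ≠ 0 := NeZero.ne _
  have hI : 0 < im I := by simp
  have hθ : jacobiTheta (I + 1 / N) ≠ 0 := jacobiTheta_ne_zero_of_one_le_im (by simp)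
  have hgauss := jacobiTheta_add_one_div_sq hN hI
  rw [jacobiTheta_neg_one_div_sub_sq hN hI] at hgauss
  have hfactor : -I * N * jacobiTheta (I + 1 / N) ^ 2 ≠ 0 :=
    mul_ne_zero (mul_ne_zero (neg_ne_zero.mpr I_ne_zero) hN₀) (pow_ne_zero 2 hθ)
  refine mul_left_cancel₀ hfactor ?_
  linear_combination -hgauss

end Chirp

section QuadraticPhase

open ZMod

lemma intCast_bval {n : ℕ} [NeZero n] (v : ZMod n) : (bval n v : ZMod n) = v := by
  unfold bval
  split_ifs <;> simp

lemma bval_zero (n : ℕ) : bval n 0 = 0 := by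
  rcases n.eq_zero_or_pos with rfl | hn <;> simp [bval, *]

lemma Lp2_zero (H H' : ℕ) : Lp2 H H' 0 = 0 := by simp [Lp2, bval_zero]

variable (H H' : ℕ) [NeZero H]

/-- The functional `f(a) = exp(iπ·ε·Σ_{k∈L} a(k)²)`, whose Fourier transform is computed. -/
def quadraticPhase2 (a : X2 H H') : ℂ :=
  cexp (Real.pi * I * (1 / H) * ∑ k, (Lp2 H H' (a k) : ℂ) ^ 2)

lemma conj_quadraticPhase2 (a : X2 H H') : starRingEnd ℂ (quadraticPhase2 H H' a) =
    cexp (-Real.pi * I * (1 / H) * ∑ k, (Lp2 H H' (a k) : ℂ) ^ 2) := by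
  rw [quadraticPhase2, ← Complex.exp_conj]
  simp

lemma quadraticPhase2_zero : quadraticPhase2 H H' 0 = 1 := by
  simp [quadraticPhase2, Lp2_zero]

variable [NeZero H']

lemma cexp_ip2 (a b : X2 H H') :
    cexp (-2 * Real.pi * I * ip2 H H' a b) = ∏ k, stdAddChar (-(a k * b k)) := by
  have hab (k) : -(a k * b k) =
      ((-(bval (H * H' ^ 2) (a k) * bval (H * H' ^ 2) (b k)) : ℤ) : ZMod (H * H' ^ 2)) := by
    simp [intCast_bval]
  simp only [hab, stdAddChar_coe, ip2, Lp2, ← Complex.exp_sum]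
  push_cast
  simp only [mul_sum]
  congr! 2 with k
  field_simp

lemma Ftr2_prod (g : ZMod (H ^ 2) → ZMod (H * H' ^ 2) → ℂ) (b : X2 H H') :
    Ftr2 H H' (fun a ↦ ∏ k, g k (a k)) b = eps02 H H' * ∏ k, 𝓕 (g k) (b k) := by
  simp only [Ftr2, cexp_ip2]
  simp only [mul_assoc, ← prod_mul_distrib, ← mul_sum, dft_apply, smul_eq_mul]
  rw [prod_univ_sum, Fintype.piFinset_univ]

lemma Ftr2_zero (f : X2 H H' → ℂ) : Ftr2 H H' f 0 = ∑ a, eps02 H H' * f a := by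
  simp [Ftr2, ip2, Lp2_zero]

variable {H}

lemma quadraticPhase2_eq_prod_chirp (hH : Even H) (a : X2 H H') :
    quadraticPhase2 H H' a = ∏ k, chirp (H * H' ^ 2) (a k) := by
  have hchirp (k) : chirp (H * H' ^ 2) (a k) =
      cexp (Real.pi * I * bval (H * H' ^ 2) (a k) ^ 2 / (H * H' ^ 2 : ℕ)) := by
    rw [← chirp_intCast (hH.mul_right _), intCast_bval]
  simp only [quadraticPhase2, Lp2, hchirp, ← Complex.exp_sum]
  push_cast
  rw [mul_sum]
  congr! 2 with k
  field_simp

lemma eps02_mul_sum_chirp_pow (hH : Even H) :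
    eps02 H H' * (∑ v, chirp (H * H' ^ 2) v) ^ H ^ 2 = (-1) ^ (H / 2) := by
  have hH₀ : (H : ℂ) ≠ 0 := NeZero.ne _
  have hH'₀ : (H' : ℂ) ≠ 0 := NeZero.ne _
  obtain ⟨m, hm⟩ := hH.two_dvd
  have hsq : H ^ 2 = 2 * (2 * m ^ 2) := by rw [hm]; ring
  have hhalf : H ^ 2 / 2 = 2 * m ^ 2 := by omega
  have hsign : (-1 : ℂ) ^ m ^ 2 = (-1) ^ (H / 2) := by
    rw [hm, Nat.mul_div_cancel_left m two_pos]
    exact neg_one_pow_congr (by simp [Nat.even_pow])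
  have hI : I ^ (2 * m ^ 2) = (-1) ^ (H / 2) := by rw [pow_mul, I_sq, hsign]
  rw [eps02, hhalf, hsq, pow_mul (∑ v, chirp _ v) 2, sum_chirp_sq (hH.mul_right _), mul_pow, hI]
  push_cast
  field_simp
  rw [mul_pow, ← pow_mul]

theorem Ftr2_quadraticPhase2 (hH : Even H) (b : X2 H H') :
    Ftr2 H H' (quadraticPhase2 H H') b =
      (-1) ^ (H / 2) * starRingEnd ℂ (quadraticPhase2 H H' b) := by
  have hprod := funext (quadraticPhase2_eq_prod_chirp H' hH)
  rw [hprod, Ftr2_prod]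
  simp only [dft_chirp (hH.mul_right _), prod_mul_distrib, prod_const, card_univ, ZMod.card,
    map_prod, ← eps02_mul_sum_chirp_pow H' hH, mul_assoc]

end QuadraticPhase

theorem stmt18_general (H H' : ℕ) [NeZero H] [NeZero H'] (hH : Even H) :
    (∑ a : X2 H H', (eps02 H H' : ℂ) * quadraticPhase2 H H' a) = (-1 : ℂ) ^ (H / 2) ∧
    ∀ b : X2 H H',
      Ftr2 H H' (quadraticPhase2 H H') b =
        (-1 : ℂ) ^ (H / 2) * starRingEnd ℂ (quadraticPhase2 H H' b) ∧
      Ftr2 H H' (quadraticPhase2 H H') b =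
        (-1 : ℂ) ^ (H / 2) *
          Complex.exp (-(Real.pi : ℂ) * I * (1 / (H : ℂ)) *
            ∑ k : ZMod (H ^ 2), ((Lp2 H H' (b k) : ℝ) : ℂ) ^ 2) := by
  refine ⟨?_, fun b ↦ ⟨Ftr2_quadraticPhase2 H' hH b, ?_⟩⟩
  · rw [← Ftr2_zero, Ftr2_quadraticPhase2 H' hH, quadraticPhase2_zero, map_one, mul_one]
  · rw [Ftr2_quadraticPhase2 H' hH, conj_quadraticPhase2]

/-- for `f(a) = exp(iπ·ε·Σ_k a(k)²)`, one has
`Σ_{a∈X} ε₀·f(a) = (−1)^(H/2)` and `(Ff)(b) = (−1)^(H/2)·conj(f(b))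
= (−1)^(H/2)·exp(−iπ·ε·Σ_k b(k)²)` for every `b ∈ X`. -/
theorem stmt18 (H H' : ℕ) [NeZero H] [NeZero H'] (hH : Even H) (hH' : Even H') :
    (∑ a : X2 H H',
        (eps02 H H' : ℂ) *
          Complex.exp ((Real.pi : ℂ) * I * (1 / (H : ℂ)) *
            ∑ k : ZMod (H ^ 2), ((Lp2 H H' (a k) : ℝ) : ℂ) ^ 2)) = (-1 : ℂ) ^ (H / 2) ∧
    ∀ b : X2 H H',
      Ftr2 H H'
          (fun a => Complex.exp ((Real.pi : ℂ) * I * (1 / (H : ℂ)) *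
            ∑ k : ZMod (H ^ 2), ((Lp2 H H' (a k) : ℝ) : ℂ) ^ 2)) b =
        (-1 : ℂ) ^ (H / 2) *
          (starRingEnd ℂ) (Complex.exp ((Real.pi : ℂ) * I * (1 / (H : ℂ)) *
            ∑ k : ZMod (H ^ 2), ((Lp2 H H' (b k) : ℝ) : ℂ) ^ 2)) ∧
      Ftr2 H H'
          (fun a => Complex.exp ((Real.pi : ℂ) * I * (1 / (H : ℂ)) *
            ∑ k : ZMod (H ^ 2), ((Lp2 H H' (a k) : ℝ) : ℂ) ^ 2)) b =
        (-1 : ℂ) ^ (H / 2) *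
          Complex.exp (-(Real.pi : ℂ) * I * (1 / (H : ℂ)) *
            ∑ k : ZMod (H ^ 2), ((Lp2 H H' (b k) : ℝ) : ℂ) ^ 2) := by
  exact stmt18_general H H' hH
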